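/- (Descent lemma for the mollified relative entropy.) Let h > 0 and let X = (x₁,…,x_n) ∈ (ℝ^d)^n satisfy m₂(X) = (1/n) Σ_j ‖x_j‖² ≤ h. Set M = L + K_{ε,n,h} where K_{ε,n,h} = 1/ε² + 3√(h n)/ε³ + √n/ε² + n√h/ε³. Then for every step size γ > 0, the gradient-descent update X⁺ with coordinates x⁺_j = x_j − γ G_j(X) satisfies F(X⁺) − F(X) ≤ −γ (1 − γM/2) · (1/n) Σ_{j=1}^n ‖G_j(X)‖². -/

import Mathlib

/-!
The proof is a majorize-minimize argument, so that no second derivative of the entropy along the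
step is needed and the centers of the updated mixture are unrestricted.

Write `k_j^Y = k_ε(· - y_j)` and `S_Y = ∑ i, k_i^Y`. The log-sum inequality (`log_sum_inequality`)
gives, pointwise,
`S_Y log S_Y ≤ ∑ j, k_j^Y log k_j^Y + ∑ j, k_j^Y g_j` with `g_j = log (S_X / k_j^X)`,
and equality holds for `Y = X`. Since `∫ k_j^Y log k_j^Y` does not depend on `Y`, the increase of
the entropy from `X` to `Y` is at most the mean over `j` of the increase of
`y ↦ ∫ k_ε(θ - y) g_j(θ) dθ` from `x_j` to `y_j` (`entropy_sub_le`). The particles are thereby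
decoupled, and `G_j(X)` is exactly the gradient at `x_j` of the average of `V + g_j` against the
translated kernel (`particleGrad_eq`).

It remains to prove a descent inequality for each average. For `V` it is the usual one, integrated
(`descent_of_lipschitz_gradient`). The function `g_j` is only known to have a bounded gradient: it
is the posterior mean of `(x_i - x_j) / ε²`, of norm at most `2 √(h n) / ε²` because the moment
bound gives `‖x_i‖ ≤ √(h n)`. Averaging against the Gaussian turns this bound into a Lipschitz
constant `2 √(h n) / ε³` for the gradient of the average, because two translates of the kernel by
`w` differ by at most `‖w‖ / ε` in `L¹` (`integral_abs_kG_sub_le`, `descent_of_bounded_gradient`).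
The resulting smoothness constant `L + 2 √(h n) / ε³` is at most `M`.
-/


open MeasureTheory Real

/-- The normalized Gaussian kernel on `ℝ^d` with covariance `ε² I_d`. -/
noncomputable def kG (d : ℕ) (ε : ℝ) (x : EuclideanSpace ℝ (Fin d)) : ℝ :=
  (2 * π * ε ^ 2) ^ (-(d : ℝ) / 2) * Real.exp (-‖x‖ ^ 2 / (2 * ε ^ 2))

/-- Gradient of the Gaussian kernel: `∇k_ε(x) = -(x/ε²) k_ε(x)`. -/
noncomputable def nablaKG (d : ℕ) (ε : ℝ) (x : EuclideanSpace ℝ (Fin d)) :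
    EuclideanSpace ℝ (Fin d) :=
  (-(1 / ε ^ 2) * kG d ε x) • x

/-- The equal-weight Gaussian mixture density with components centered at `X`. -/
noncomputable def qMix (d n : ℕ) (ε : ℝ) (X : Fin n → EuclideanSpace ℝ (Fin d))
    (θ : EuclideanSpace ℝ (Fin d)) : ℝ :=
  (1 / n : ℝ) * ∑ i, kG d ε (θ - X i)

/-- The mollified relative entropy `F(X) = ∫ V q_X + ∫ q_X log q_X`. -/
noncomputable def mollF (d n : ℕ) (ε : ℝ) (V : EuclideanSpace ℝ (Fin d) → ℝ)
    (X : Fin n → EuclideanSpace ℝ (Fin d)) : ℝ :=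
  (∫ θ, V θ * qMix d n ε X θ) + ∫ θ, qMix d n ε X θ * Real.log (qMix d n ε X θ)

/-- The particle gradient `G_j(X)`. -/
noncomputable def particleGrad (d n : ℕ) (ε : ℝ)
    (gradV : EuclideanSpace ℝ (Fin d) → EuclideanSpace ℝ (Fin d))
    (X : Fin n → EuclideanSpace ℝ (Fin d)) (j : Fin n) : EuclideanSpace ℝ (Fin d) :=
  (∫ y, kG d ε (y - X j) • gradV y) +
    ∫ y, ((∑ i, kG d ε (y - X i))⁻¹ * kG d ε (y - X j)) • (∑ i, nablaKG d ε (y - X i))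


open scoped RealInnerProductSpace

/-! ### The Gaussian kernel -/

section Kernel

variable {d : ℕ} {ε : ℝ}

lemma kG_pos (hε : 0 < ε) (x : EuclideanSpace ℝ (Fin d)) : 0 < kG d ε x := by
  unfold kG; positivity

lemma continuous_kG : Continuous (kG d ε) := by
  unfold kG; fun_prop

lemma kG_neg (x : EuclideanSpace ℝ (Fin d)) : kG d ε (-x) = kG d ε x := by
  simp [kG]

lemma integral_kG (hε : 0 < ε) : ∫ x, kG d ε x = 1 := by
  have hb : 0 < 1 / (2 * ε ^ 2) := by positivity
  have h1 := GaussianFourier.integral_rexp_neg_mul_sq_norm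
    (V := EuclideanSpace ℝ (Fin d)) hb
  have h2 : ∀ x : EuclideanSpace ℝ (Fin d), kG d ε x =
      (2 * π * ε ^ 2) ^ (-(d : ℝ) / 2) * Real.exp (-(1 / (2 * ε ^ 2)) * ‖x‖ ^ 2) := by
    intro x; unfold kG; congr 2; ring
  simp_rw [h2]
  rw [integral_const_mul, h1, finrank_euclideanSpace, Fintype.card_fin]
  have h3 : π / (1 / (2 * ε ^ 2)) = 2 * π * ε ^ 2 := by field_simp
  rw [h3, ← Real.rpow_add (by positivity)]
  rw [show -(d : ℝ) / 2 + (d : ℝ) / 2 = 0 by ring, Real.rpow_zero]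

lemma integrable_kG (hε : 0 < ε) : Integrable (kG d ε) :=
  Integrable.of_integral_ne_zero (by rw [integral_kG hε]; exact one_ne_zero)

lemma integrable_sq_mul_kG (hε : 0 < ε) :
    Integrable (fun x : EuclideanSpace ℝ (Fin d) => ‖x‖ ^ 2 * kG d ε x) := by
  have hb : 0 < 1 / (4 * ε ^ 2) := by positivity
  have h1 : Integrable (fun x : EuclideanSpace ℝ (Fin d) =>
      Real.exp (-(1 / (4 * ε ^ 2)) * ‖x‖ ^ 2)) :=
    Integrable.of_integral_ne_zero (by
      rw [GaussianFourier.integral_rexp_neg_mul_sq_norm hb]; positivity)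
  refine (h1.const_mul ((2 * π * ε ^ 2) ^ (-(d : ℝ) / 2) * (4 * ε ^ 2))).mono'
    (by have := continuous_kG (d := d) (ε := ε); exact (by fun_prop : Continuous _).aestronglyMeasurable)
    (Filter.Eventually.of_forall fun x => ?_)
  have hk := kG_pos hε x
  rw [Real.norm_of_nonneg (by positivity)]
  -- `t ≤ e^t` at `t = ‖x‖² / (4ε²)` trades the polynomial factor for half of the exponent.
  have h2 := Real.add_one_le_exp (‖x‖ ^ 2 / (4 * ε ^ 2))
  have h3 : ‖x‖ ^ 2 ≤ 4 * ε ^ 2 * Real.exp (‖x‖ ^ 2 / (4 * ε ^ 2)) := by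
    have h5 : ‖x‖ ^ 2 / (4 * ε ^ 2) ≤ Real.exp (‖x‖ ^ 2 / (4 * ε ^ 2)) := by linarith
    rw [div_le_iff₀ (by positivity)] at h5
    linarith
  have h4 : Real.exp (-(1 / (4 * ε ^ 2)) * ‖x‖ ^ 2) =
      Real.exp (‖x‖ ^ 2 / (4 * ε ^ 2)) * Real.exp (-‖x‖ ^ 2 / (2 * ε ^ 2)) := by
    rw [← Real.exp_add]; congr 1; field_simp; ring
  rw [h4]
  calc ‖x‖ ^ 2 * kG d ε x
      ≤ (4 * ε ^ 2 * Real.exp (‖x‖ ^ 2 / (4 * ε ^ 2))) * kG d ε x := by gcongr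
    _ = _ := by unfold kG; ring

/-- Continuous functions of at most quadratic growth: the class of functions that are integrated
against translates of the Gaussian kernel. -/
def QuadGrowth {F : Type*} [NormedAddCommGroup F] (f : EuclideanSpace ℝ (Fin d) → F) : Prop :=
  Continuous f ∧ ∃ A B : ℝ, 0 ≤ B ∧ ∀ z, ‖f z‖ ≤ A + B * ‖z‖ ^ 2

lemma QuadGrowth.comp_add {F : Type*} [NormedAddCommGroup F]
    {f : EuclideanSpace ℝ (Fin d) → F} (hf : QuadGrowth f) (x : EuclideanSpace ℝ (Fin d)) :
    QuadGrowth (fun z => f (z + x)) := by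
  obtain ⟨hc, A, B, hB, h⟩ := hf
  refine ⟨by fun_prop, A + 2 * B * ‖x‖ ^ 2, 2 * B, by positivity, fun z => (h _).trans ?_⟩
  have h1 : ‖z + x‖ ^ 2 ≤ 2 * ‖z‖ ^ 2 + 2 * ‖x‖ ^ 2 := by
    have := norm_add_le z x
    have h0 := norm_nonneg (z + x)
    nlinarith [sq_nonneg (‖z‖ - ‖x‖)]
  nlinarith

lemma QuadGrowth.add {F : Type*} [NormedAddCommGroup F]
    {f g : EuclideanSpace ℝ (Fin d) → F} (hf : QuadGrowth f) (hg : QuadGrowth g) :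
    QuadGrowth (fun z => f z + g z) := by
  obtain ⟨hc, A, B, hB, h⟩ := hf
  obtain ⟨hc', A', B', hB', h'⟩ := hg
  refine ⟨by fun_prop, A + A', B + B', by positivity, fun z => (norm_add_le _ _).trans ?_⟩
  linarith [h z, h' z]

lemma QuadGrowth.const {F : Type*} [NormedAddCommGroup F] (c : F) :
    QuadGrowth (fun _ : EuclideanSpace ℝ (Fin d) => c) :=
  ⟨continuous_const, ‖c‖, 0, le_rfl, fun z => by simp⟩

lemma QuadGrowth.id_sub (c : EuclideanSpace ℝ (Fin d)) :
    QuadGrowth (fun z : EuclideanSpace ℝ (Fin d) => z - c) := by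
  refine ⟨by fun_prop, 1 + ‖c‖, 1, zero_le_one, fun z => (norm_sub_le _ _).trans ?_⟩
  nlinarith [sq_nonneg (‖z‖ - 1)]

lemma QuadGrowth.inner_right {f : EuclideanSpace ℝ (Fin d) → EuclideanSpace ℝ (Fin d)}
    (hf : QuadGrowth f) (w : EuclideanSpace ℝ (Fin d)) :
    QuadGrowth (fun z => ⟪w, f z⟫) := by
  obtain ⟨hc, A, B, hB, h⟩ := hf
  refine ⟨by fun_prop, ‖w‖ * A, ‖w‖ * B, by positivity, fun z => (norm_inner_le_norm _ _).trans ?_⟩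
  nlinarith [mul_le_mul_of_nonneg_left (h z) (norm_nonneg w)]

lemma QuadGrowth.integrable_kG_smul {F : Type*} [NormedAddCommGroup F] [NormedSpace ℝ F]
    (hε : 0 < ε) {f : EuclideanSpace ℝ (Fin d) → F} (hf : QuadGrowth f) :
    Integrable (fun z => kG d ε z • f z) := by
  obtain ⟨hc, A, B, hB, h⟩ := hf
  refine (((integrable_kG hε).const_mul A).add ((integrable_sq_mul_kG hε).const_mul B)).mono'
    ((continuous_kG.smul hc).aestronglyMeasurable)
    (Filter.Eventually.of_forall fun z => ?_)
  have hk := kG_pos hε z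
  rw [norm_smul, Real.norm_of_nonneg hk.le]
  simp only [Pi.add_apply]
  nlinarith [mul_le_mul_of_nonneg_left (h z) hk.le]

lemma QuadGrowth.integrable_kG_sub_smul {F : Type*} [NormedAddCommGroup F] [NormedSpace ℝ F]
    (hε : 0 < ε) {f : EuclideanSpace ℝ (Fin d) → F} (hf : QuadGrowth f)
    (x : EuclideanSpace ℝ (Fin d)) :
    Integrable (fun z => kG d ε (z - x) • f z) := by
  have := ((hf.comp_add x).integrable_kG_smul hε).comp_sub_right x
  simpa using this

lemma integral_kG_sub_smul {F : Type*} [NormedAddCommGroup F] [NormedSpace ℝ F]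
    (f : EuclideanSpace ℝ (Fin d) → F) (x : EuclideanSpace ℝ (Fin d)) :
    ∫ z, kG d ε (z - x) • f z = ∫ z, kG d ε z • f (z + x) := by
  have := integral_sub_right_eq_self (μ := volume) (fun z => kG d ε z • f (z + x)) x
  simpa using this

lemma integral_kG_sub_smul_id (x : EuclideanSpace ℝ (Fin d)) :
    ∫ z, kG d ε (z - x) • (z - x) = 0 := by
  rw [integral_kG_sub_smul (fun z => z - x) x]
  simp only [add_sub_cancel_right]
  have := integral_neg_eq_self (fun z => kG d ε z • z) (volume : Measure (EuclideanSpace ℝ (Fin d)))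
  simp only [kG_neg, smul_neg, integral_neg] at this
  have h2 : (2 : ℝ) • ∫ z : EuclideanSpace ℝ (Fin d), kG d ε z • z = 0 := by
    rw [two_smul]
    nth_rewrite 1 [← this]
    exact neg_add_cancel _
  exact (smul_eq_zero.1 h2).resolve_left two_ne_zero

/-- A linear gradient bound integrates to quadratic growth. -/
lemma quadGrowth_of_gradient {f : EuclideanSpace ℝ (Fin d) → ℝ}
    {f' : EuclideanSpace ℝ (Fin d) → EuclideanSpace ℝ (Fin d)}
    (hf : ∀ x, HasGradientAt f (f' x) x) {A B : ℝ} (hB : 0 ≤ B)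
    (hb : ∀ x, ‖f' x‖ ≤ A + B * ‖x‖) : QuadGrowth f := by
  have hA : 0 ≤ A := by simpa using (norm_nonneg _).trans (hb 0)
  refine ⟨continuous_iff_continuousAt.2 fun x => (hf x).hasFDerivAt.continuousAt,
    |f 0| + A, A + B, by positivity, fun z => ?_⟩
  have h1 := (convex_closedBall (0 : EuclideanSpace ℝ (Fin d)) ‖z‖).norm_image_sub_le_of_norm_hasFDerivWithin_le
    (C := A + B * ‖z‖) (f := f) (x := 0) (y := z)
    (fun x _ => (hf x).hasFDerivAt.hasFDerivWithinAt) (fun x hx => by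
      rw [LinearIsometryEquiv.norm_map]
      have : ‖x‖ ≤ ‖z‖ := by simpa using hx
      refine (hb x).trans ?_
      gcongr) (by simp) (by simp)
  rw [sub_zero] at h1
  have h2 : ‖f z‖ ≤ |f 0| + ‖f z - f 0‖ := by
    have := norm_add_le (f 0) (f z - f 0)
    simpa using this
  nlinarith [sq_nonneg (‖z‖ - 1), norm_nonneg z]

/-- Total variation estimate for Gaussian translates, through the Hellinger affinity. -/
lemma integral_abs_kG_sub_le (hε : 0 < ε) (w : EuclideanSpace ℝ (Fin d)) :
    ∫ z, |kG d ε (z - w) - kG d ε z| ≤ ‖w‖ / ε := by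
  rcases eq_or_ne w 0 with rfl | hw
  · simp
  have hw' : 0 < ‖w‖ := norm_pos_iff.2 hw
  set u : EuclideanSpace ℝ (Fin d) := (1 / 2 : ℝ) • w with hu
  set ρ : ℝ := Real.exp (-(‖w‖ ^ 2 / (8 * ε ^ 2))) with hρ
  have hρ1 : 1 - ‖w‖ ^ 2 / (8 * ε ^ 2) ≤ ρ := by
    have := Real.add_one_le_exp (-(‖w‖ ^ 2 / (8 * ε ^ 2))); linarith
  -- The geometric mean of two translates is a multiple of the kernel at the midpoint.
  have hmid : ∀ z, kG d ε (z - w) * kG d ε z = (ρ * kG d ε (z - u)) ^ 2 := by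
    intro z
    have hpar : ‖z - w‖ ^ 2 + ‖z‖ ^ 2 = 2 * ‖z - u‖ ^ 2 + ‖w‖ ^ 2 / 2 := by
      rw [hu, norm_sub_sq_real, norm_sub_sq_real, inner_smul_right, norm_smul]
      norm_num; ring
    unfold kG
    rw [hρ]
    have : Real.exp (-‖z - w‖ ^ 2 / (2 * ε ^ 2)) * Real.exp (-‖z‖ ^ 2 / (2 * ε ^ 2)) =
        (Real.exp (-(‖w‖ ^ 2 / (8 * ε ^ 2))) * Real.exp (-‖z - u‖ ^ 2 / (2 * ε ^ 2))) ^ 2 := by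
      rw [← Real.exp_add, ← Real.exp_add, ← Real.exp_nat_mul]
      congr 1
      field_simp
      push_cast
      linarith
    linear_combination ((2 * π * ε ^ 2) ^ (-(d : ℝ) / 2)) ^ 2 * this
  -- Weighted arithmetic-geometric mean applied to `|p - q| = |√p - √q| (√p + √q)`, with the
  -- weight `2ε / ‖w‖` that balances the two integrals.
  have hpt : ∀ z, |kG d ε (z - w) - kG d ε z| ≤
      (2 * ε / ‖w‖) * (kG d ε (z - w) + kG d ε z - 2 * (ρ * kG d ε (z - u))) +
        (‖w‖ / (4 * ε)) * (kG d ε (z - w) + kG d ε z) := by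
    intro z
    have hp := kG_pos hε (z - w)
    have hq := kG_pos hε z
    have hm : Real.sqrt (kG d ε (z - w)) * Real.sqrt (kG d ε z) = ρ * kG d ε (z - u) := by
      rw [← Real.sqrt_mul hp.le, hmid z, Real.sqrt_sq]
      have := kG_pos hε (z - u)
      positivity
    have hp2 := Real.sq_sqrt hp.le
    have hq2 := Real.sq_sqrt hq.le
    set s := Real.sqrt (kG d ε (z - w))
    set t := Real.sqrt (kG d ε z)
    rw [← hm, ← hp2, ← hq2]
    have hs : 0 ≤ s := Real.sqrt_nonneg _
    have ht : 0 ≤ t := Real.sqrt_nonneg _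
    have h1 : |s ^ 2 - t ^ 2| = |s - t| * (s + t) := by
      rw [show s ^ 2 - t ^ 2 = (s - t) * (s + t) by ring, abs_mul, abs_of_nonneg (add_nonneg hs ht)]
    have hc : 0 < 2 * ε / ‖w‖ := by positivity
    have hc' : ‖w‖ / (4 * ε) = 1 / (2 * (2 * ε / ‖w‖)) := by field_simp; norm_num
    rw [h1, hc']
    set c := 2 * ε / ‖w‖
    have h2 : |s - t| * (s + t) ≤ c * |s - t| ^ 2 + 1 / (2 * c) * ((s + t) ^ 2 / 2) := by
      have : 0 ≤ c * (|s - t| - (s + t) / (2 * c)) ^ 2 := by positivity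
      have e : c * (|s - t| - (s + t) / (2 * c)) ^ 2 =
        c * |s - t| ^ 2 + 1 / (2 * c) * ((s + t) ^ 2 / 2) - |s - t| * (s + t) := by
        field_simp; ring
      linarith
    rw [sq_abs] at h2
    have h3 : 1 / (2 * c) * ((s + t) ^ 2 / 2) ≤ 1 / (2 * c) * (s ^ 2 + t ^ 2) := by
      gcongr
      nlinarith [sq_nonneg (s - t)]
    nlinarith
  have ik := integrable_kG (d := d) hε
  have ikw := ik.comp_sub_right w
  have iku := ik.comp_sub_right u
  have ew : ∫ z, kG d ε (z - w) = 1 := by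
    rw [integral_sub_right_eq_self (μ := volume) (kG d ε) w, integral_kG hε]
  have eu : ∫ z, kG d ε (z - u) = 1 := by
    rw [integral_sub_right_eq_self (μ := volume) (kG d ε) u, integral_kG hε]
  have i1 := (((ikw.add ik).sub ((iku.const_mul ρ).const_mul 2)).const_mul (2 * ε / ‖w‖))
  have i2 := (ikw.add ik).const_mul (‖w‖ / (4 * ε))
  calc ∫ z, |kG d ε (z - w) - kG d ε z|
      ≤ ∫ z, ((2 * ε / ‖w‖) * (kG d ε (z - w) + kG d ε z - 2 * (ρ * kG d ε (z - u))) +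
        (‖w‖ / (4 * ε)) * (kG d ε (z - w) + kG d ε z)) :=
        integral_mono (ikw.sub ik).abs (i1.add i2) hpt
    _ = (2 * ε / ‖w‖) * (1 + 1 - 2 * (ρ * 1)) + (‖w‖ / (4 * ε)) * (1 + 1) := by
        rw [integral_add (by exact i1) (by exact i2), integral_const_mul, integral_const_mul,
          integral_sub (by exact ikw.add ik) (by exact (iku.const_mul ρ).const_mul 2),
          integral_add ikw ik, integral_const_mul, integral_const_mul, ew, eu, integral_kG hε]
    _ ≤ (2 * ε / ‖w‖) * (‖w‖ ^ 2 / (4 * ε ^ 2)) + (‖w‖ / (4 * ε)) * (1 + 1) := by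
        gcongr
        have e : ‖w‖ ^ 2 / (4 * ε ^ 2) = 2 * (‖w‖ ^ 2 / (8 * ε ^ 2)) := by ring
        linarith
    _ = ‖w‖ / ε := by field_simp; ring

end Kernel

/-! ### Descent inequalities for Gaussian averages -/

section Descent

variable {d : ℕ} {ε : ℝ}

lemma descent_one_dim {φ φ' : ℝ → ℝ} {a b : ℝ} (h : ∀ t, HasDerivAt φ (φ' t) t)
    (hb : ∀ t, 0 ≤ t → φ' t ≤ a + b * t) : φ 1 ≤ φ 0 + a + b / 2 := by
  have hd : ∀ t, HasDerivAt (fun t => φ t - a * t - b / 2 * t ^ 2) (φ' t - a - b * t) t := by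
    intro t
    convert! ((h t).sub ((hasDerivAt_id t).const_mul a)).sub
      (((hasDerivAt_id t).pow 2).const_mul (b / 2)) using 1
    simp; ring
  have hanti : AntitoneOn (fun t => φ t - a * t - b / 2 * t ^ 2) (Set.Icc 0 1) := by
    refine antitoneOn_of_deriv_nonpos (convex_Icc 0 1)
      (fun t _ => (hd t).continuousAt.continuousWithinAt)
      (fun t _ => (hd t).differentiableAt.differentiableWithinAt) fun t ht => ?_
    rw [interior_Icc] at ht
    rw [(hd t).deriv]
    linarith [hb t ht.1.le]
  have := hanti (Set.left_mem_Icc.2 zero_le_one) (Set.right_mem_Icc.2 zero_le_one) zero_le_one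
  simp at this
  linarith

lemma hasDerivAt_along_line {f : EuclideanSpace ℝ (Fin d) → ℝ}
    {f' : EuclideanSpace ℝ (Fin d) → EuclideanSpace ℝ (Fin d)}
    (hf : ∀ x, HasGradientAt f (f' x) x) (z w : EuclideanSpace ℝ (Fin d)) (t : ℝ) :
    HasDerivAt (fun t : ℝ => f (z + t • w)) ⟪w, f' (z + t • w)⟫ t := by
  have h1 : HasDerivAt (fun t : ℝ => z + t • w) w t := by
    simpa using ((hasDerivAt_id t).smul_const w).const_add z
  have := (hf (z + t • w)).hasFDerivAt.comp_hasDerivAt t h1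
  simpa [Function.comp_def, real_inner_comm] using this

/-- The descent inequality for a function with Lipschitz gradient survives averaging against the
Gaussian kernel. -/
lemma descent_of_lipschitz_gradient (hε : 0 < ε) {f : EuclideanSpace ℝ (Fin d) → ℝ}
    {f' : EuclideanSpace ℝ (Fin d) → EuclideanSpace ℝ (Fin d)}
    (hf : ∀ x, HasGradientAt f (f' x) x) {L : ℝ} (hL : ∀ x y, ‖f' x - f' y‖ ≤ L * ‖x - y‖)
    (hq : QuadGrowth f) (hq' : QuadGrowth f') (x w : EuclideanSpace ℝ (Fin d)) :
    (∫ z, kG d ε (z - (x + w)) • f z) - ∫ z, kG d ε (z - x) • f z ≤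
      ⟪w, ∫ z, kG d ε (z - x) • f' z⟫ + L / 2 * ‖w‖ ^ 2 := by
  have hpt : ∀ z, f (z + w) ≤ f z + ⟪w, f' z⟫ + L * ‖w‖ ^ 2 / 2 := by
    intro z
    have := descent_one_dim (a := ⟪w, f' z⟫) (b := L * ‖w‖ ^ 2)
      (hasDerivAt_along_line hf z w) fun t ht => by
        have h1 : ⟪w, f' (z + t • w)⟫ = ⟪w, f' z⟫ + ⟪w, f' (z + t • w) - f' z⟫ := by
          rw [← inner_add_right]; congr 1; abel
        have h2 := real_inner_le_norm w (f' (z + t • w) - f' z)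
        have h3 := hL (z + t • w) z
        rw [add_sub_cancel_left, norm_smul, Real.norm_of_nonneg ht] at h3
        have h4 := mul_le_mul_of_nonneg_left h3 (norm_nonneg w)
        rw [h1]
        linarith
    simpa using this
  rw [integral_kG_sub_smul, integral_kG_sub_smul, integral_kG_sub_smul]
  have hqx := hq.comp_add x
  have hqx' := hq'.comp_add x
  have i1 := (hq.comp_add (x + w)).integrable_kG_smul hε
  have i2 := hqx.integrable_kG_smul hε
  have i3 := hqx'.integrable_kG_smul hε
  have i4 := (hqx'.inner_right w).integrable_kG_smul hε
  have i5 := (QuadGrowth.const (d := d) (L * ‖w‖ ^ 2 / 2)).integrable_kG_smul hε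
  have e4 : ∫ z, kG d ε z • ⟪w, f' (z + x)⟫ = ⟪w, ∫ z, kG d ε z • f' (z + x)⟫ := by
    rw [← integral_inner i3]
    simp only [inner_smul_right, smul_eq_mul]
  have e5 : ∫ z, kG d ε z • (L * ‖w‖ ^ 2 / 2) = L * ‖w‖ ^ 2 / 2 := by
    rw [integral_smul_const, integral_kG hε, one_smul]
  have key : ∫ z, kG d ε z • f (z + (x + w)) ≤
      ∫ z, (kG d ε z • f (z + x) + kG d ε z • ⟪w, f' (z + x)⟫ +
        kG d ε z • (L * ‖w‖ ^ 2 / 2)) := by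
    refine integral_mono i1 ((i2.add i4).add i5) fun z => ?_
    have := hpt (z + x)
    rw [add_assoc] at this
    simp only [smul_eq_mul]
    nlinarith [mul_le_mul_of_nonneg_left this (kG_pos hε z).le]
  rw [integral_add (by exact i2.add i4) i5, integral_add i2 i4, e4, e5] at key
  linarith

/-- A function with merely bounded gradient becomes smooth after averaging against the Gaussian
kernel: the gradient of the average is Lipschitz because translates of the kernel are close in
total variation. -/
lemma descent_of_bounded_gradient (hε : 0 < ε) {f : EuclideanSpace ℝ (Fin d) → ℝ}
    {f' : EuclideanSpace ℝ (Fin d) → EuclideanSpace ℝ (Fin d)}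
    (hf : ∀ x, HasGradientAt f (f' x) x) (hc : Continuous f') {R : ℝ} (hR : ∀ x, ‖f' x‖ ≤ R)
    (x w : EuclideanSpace ℝ (Fin d)) :
    (∫ z, kG d ε (z - (x + w)) • f z) - ∫ z, kG d ε (z - x) • f z ≤
      ⟪w, ∫ z, kG d ε (z - x) • f' z⟫ + R / ε / 2 * ‖w‖ ^ 2 := by
  have hR0 : 0 ≤ R := (norm_nonneg _).trans (hR 0)
  have hq : QuadGrowth f := quadGrowth_of_gradient hf le_rfl (A := R) (by simpa using hR)
  have hq' : QuadGrowth f' := ⟨hc, R, 0, le_rfl, by simpa using hR⟩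
  have hw : ∀ z, |⟪w, f' z⟫| ≤ ‖w‖ * R := fun z =>
    (abs_real_inner_le_norm _ _).trans (by gcongr; exact hR z)
  have hfc := hq.1
  have hk := continuous_kG (d := d) (ε := ε)
  have hderiv : ∀ t : ℝ, HasDerivAt (fun t : ℝ => ∫ z, kG d ε z • f (z + x + t • w))
      (∫ z, kG d ε z • ⟪w, f' (z + x + t • w)⟫) t := by
    intro t
    refine (hasDerivAt_integral_of_dominated_loc_of_deriv_le
      (bound := fun z => kG d ε z * (‖w‖ * R)) (s := Set.univ) Filter.univ_mem
      (Filter.Eventually.of_forall fun s => (by fun_prop : Continuous _).aestronglyMeasurable)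
      ?_ (by fun_prop : Continuous _).aestronglyMeasurable
      (Filter.Eventually.of_forall fun z s _ => ?_) ((integrable_kG hε).mul_const _)
      (Filter.Eventually.of_forall fun z s _ =>
        (hasDerivAt_along_line hf (z + x) w s).const_mul (kG d ε z))).2
    · simpa only [add_assoc, smul_eq_mul] using (hq.comp_add (x + t • w)).integrable_kG_smul hε
    · rw [norm_mul, Real.norm_of_nonneg (kG_pos hε z).le, Real.norm_eq_abs]
      exact mul_le_mul_of_nonneg_left (hw _) (kG_pos hε z).le
  have i3 := hq'.integrable_kG_sub_smul hε x
  have hbound : ∀ t : ℝ, 0 ≤ t → ∫ z, kG d ε z • ⟪w, f' (z + x + t • w)⟫ ≤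
      ⟪w, ∫ z, kG d ε (z - x) • f' z⟫ + (R / ε * ‖w‖ ^ 2) * t := by
    intro t ht
    have e1 : ∫ z, kG d ε z • ⟪w, f' (z + x + t • w)⟫ =
        ∫ z, kG d ε (z - x - t • w) • ⟪w, f' z⟫ := by
      have := integral_kG_sub_smul (ε := ε) (fun z => ⟪w, f' z⟫) (x + t • w)
      simpa only [add_assoc, sub_sub] using this.symm
    have e2 : ⟪w, ∫ z, kG d ε (z - x) • f' z⟫ = ∫ z, kG d ε (z - x) • ⟪w, f' z⟫ := by
      rw [← integral_inner i3]
      simp only [inner_smul_right, smul_eq_mul]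
    have i1 : Integrable fun z => kG d ε (z - x - t • w) • ⟪w, f' z⟫ := by
      simpa only [sub_sub] using (hq'.inner_right w).integrable_kG_sub_smul hε (x + t • w)
    have i2 := (hq'.inner_right w).integrable_kG_sub_smul hε x
    have iabs : Integrable fun z => |kG d ε (z - x - t • w) - kG d ε (z - x)| :=
      ((((integrable_kG hε).comp_sub_right (t • w)).sub (integrable_kG hε)).abs).comp_sub_right x
    have e3 : ∫ z, |kG d ε (z - x - t • w) - kG d ε (z - x)| ≤ ‖t • w‖ / ε := by
      rw [integral_sub_right_eq_self (μ := volume)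
        (fun z => |kG d ε (z - t • w) - kG d ε z|) x]
      exact integral_abs_kG_sub_le hε _
    have e4 : (∫ z, kG d ε (z - x - t • w) • ⟪w, f' z⟫) - ∫ z, kG d ε (z - x) • ⟪w, f' z⟫ ≤
        ∫ z, |kG d ε (z - x - t • w) - kG d ε (z - x)| * (‖w‖ * R) := by
      rw [← integral_sub i1 i2]
      refine integral_mono (i1.sub i2) (iabs.mul_const _) fun z => ?_
      simp only [smul_eq_mul]
      rw [← sub_mul]
      refine (le_abs_self _).trans ?_
      rw [abs_mul]
      exact mul_le_mul_of_nonneg_left (hw z) (abs_nonneg _)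
    rw [integral_mul_const] at e4
    have e5 := mul_le_mul_of_nonneg_right e3 (mul_nonneg (norm_nonneg w) hR0)
    rw [norm_smul, Real.norm_of_nonneg ht] at e5
    have e6 : t * ‖w‖ / ε * (‖w‖ * R) = (R / ε * ‖w‖ ^ 2) * t := by ring
    rw [e1, e2]
    linarith
  have := descent_one_dim hderiv hbound
  rw [integral_kG_sub_smul (fun z => f z) (x + w), integral_kG_sub_smul (fun z => f z) x]
  simp only [one_smul, zero_smul, add_zero, add_assoc] at this
  linarith

end Descent

/-! ### Majorization of the mixture entropy -/

section Entropy

variable {d n : ℕ} {ε : ℝ}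

/-- Minus the logarithm of the posterior probability that a sample `θ` of the mixture centered at
`X` was drawn from the `j`-th component. -/
noncomputable def negLogPost (ε : ℝ) (X : Fin n → EuclideanSpace ℝ (Fin d)) (j : Fin n)
    (θ : EuclideanSpace ℝ (Fin d)) : ℝ :=
  Real.log (∑ i, kG d ε (θ - X i)) - Real.log (kG d ε (θ - X j))

/-- The gradient of `negLogPost` in `θ`. -/
noncomputable def gradNegLogPost (ε : ℝ) (X : Fin n → EuclideanSpace ℝ (Fin d)) (j : Fin n)
    (θ : EuclideanSpace ℝ (Fin d)) : EuclideanSpace ℝ (Fin d) :=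
  (∑ i, kG d ε (θ - X i))⁻¹ • (∑ i, nablaKG d ε (θ - X i)) + (1 / ε ^ 2) • (θ - X j)

lemma sum_kG_pos (hε : 0 < ε) (X : Fin n → EuclideanSpace ℝ (Fin d)) (j : Fin n)
    (θ : EuclideanSpace ℝ (Fin d)) : 0 < ∑ i, kG d ε (θ - X i) :=
  Finset.sum_pos (fun _ _ => kG_pos hε _) ⟨j, Finset.mem_univ j⟩

lemma hasFDerivAt_kG (x θ : EuclideanSpace ℝ (Fin d)) :
    HasFDerivAt (fun θ => kG d ε (θ - x)) (innerSL ℝ (nablaKG d ε (θ - x))) θ := by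
  have h1 : HasFDerivAt (fun θ : EuclideanSpace ℝ (Fin d) => ‖θ - x‖ ^ 2)
      (2 • innerSL ℝ (θ - x)) θ := by
    simpa using ((hasFDerivAt_id θ).sub_const x).norm_sq
  have h2 := (((h1.neg.mul_const (1 / (2 * ε ^ 2))).exp).const_mul
    ((2 * π * ε ^ 2) ^ (-(d : ℝ) / 2)))
  have e : (fun θ => kG d ε (θ - x)) = fun θ => (2 * π * ε ^ 2) ^ (-(d : ℝ) / 2) *
      Real.exp (-‖θ - x‖ ^ 2 * (1 / (2 * ε ^ 2))) := by
    funext θ; unfold kG; congr 2; ring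
  rw [e]
  refine h2.congr_fderiv ?_
  ext v
  simp [nablaKG, kG, div_eq_mul_inv]
  ring

lemma log_kG (hε : 0 < ε) (x : EuclideanSpace ℝ (Fin d)) :
    Real.log (kG d ε x) =
      Real.log ((2 * π * ε ^ 2) ^ (-(d : ℝ) / 2)) - 1 / (2 * ε ^ 2) * ‖x‖ ^ 2 := by
  unfold kG
  rw [Real.log_mul (by positivity) (by positivity), Real.log_exp]
  ring

lemma quadGrowth_log_kG (hε : 0 < ε) :
    QuadGrowth (fun x : EuclideanSpace ℝ (Fin d) => Real.log (kG d ε x)) := by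
  simp_rw [log_kG hε]
  refine ⟨by fun_prop, |Real.log ((2 * π * ε ^ 2) ^ (-(d : ℝ) / 2))|, 1 / (2 * ε ^ 2),
    by positivity, fun z => (norm_sub_le _ _).trans ?_⟩
  rw [Real.norm_eq_abs, Real.norm_of_nonneg (by positivity)]

lemma hasGradientAt_negLogPost (hε : 0 < ε) (X : Fin n → EuclideanSpace ℝ (Fin d)) (j : Fin n)
    (θ : EuclideanSpace ℝ (Fin d)) :
    HasGradientAt (negLogPost ε X j) (gradNegLogPost ε X j θ) θ := by
  rw [hasGradientAt_iff_hasFDerivAt]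
  have h1 : HasFDerivAt (fun θ => ∑ i, kG d ε (θ - X i))
      (∑ i, innerSL ℝ (nablaKG d ε (θ - X i))) θ :=
    HasFDerivAt.fun_sum fun i _ => hasFDerivAt_kG (X i) θ
  have h2 := (h1.log (sum_kG_pos hε X j θ).ne').sub
    ((hasFDerivAt_kG (ε := ε) (X j) θ).log (kG_pos hε _).ne')
  refine h2.congr_fderiv ?_
  ext v
  have hk := (kG_pos hε (θ - X j)).ne'
  simp only [gradNegLogPost, nablaKG, sub_apply, smul_apply, sum_apply, innerSL_apply_apply,
    InnerProductSpace.toDual_apply_apply, inner_add_left, inner_smul_left, sum_inner, smul_eq_mul,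
    RCLike.conj_to_real]
  field_simp
  ring

lemma continuous_gradNegLogPost (hε : 0 < ε) (X : Fin n → EuclideanSpace ℝ (Fin d)) (j : Fin n) :
    Continuous (gradNegLogPost ε X j) := by
  have hk := continuous_kG (d := d) (ε := ε)
  have h1 : Continuous fun θ => ∑ i, kG d ε (θ - X i) := by fun_prop
  have h2 := h1.inv₀ fun θ => (sum_kG_pos hε X j θ).ne'
  have h3 : Continuous fun θ => ∑ i, nablaKG d ε (θ - X i) := by
    unfold nablaKG
    fun_prop
  exact (h2.smul h3).add (by fun_prop)

/-- The gradient of `negLogPost` is the posterior mean of `(X i - X j) / ε²`. -/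
lemma norm_gradNegLogPost_le (hε : 0 < ε) (X : Fin n → EuclideanSpace ℝ (Fin d)) (j : Fin n)
    {D : ℝ} (hD : ∀ i, ‖X i - X j‖ ≤ D) (θ : EuclideanSpace ℝ (Fin d)) :
    ‖gradNegLogPost ε X j θ‖ ≤ D / ε ^ 2 := by
  have hS := sum_kG_pos hε X j θ
  have e : gradNegLogPost ε X j θ = ((∑ i, kG d ε (θ - X i))⁻¹ * (1 / ε ^ 2)) •
      ∑ i, kG d ε (θ - X i) • (X i - X j) := by
    have h1 : ∑ i, nablaKG d ε (θ - X i) = (1 / ε ^ 2) •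
        (∑ i, kG d ε (θ - X i) • (X i - X j)) -
        ((1 / ε ^ 2) * ∑ i, kG d ε (θ - X i)) • (θ - X j) := by
      rw [Finset.smul_sum, Finset.mul_sum, Finset.sum_smul, ← Finset.sum_sub_distrib]
      refine Finset.sum_congr rfl fun i _ => ?_
      unfold nablaKG
      module
    rw [gradNegLogPost, h1, smul_sub, smul_smul, smul_smul, mul_left_comm,
      inv_mul_cancel₀ hS.ne', mul_one, sub_add_cancel]
  have h2 : ‖∑ i, kG d ε (θ - X i) • (X i - X j)‖ ≤ (∑ i, kG d ε (θ - X i)) * D := by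
    rw [Finset.sum_mul]
    refine (norm_sum_le _ _).trans (Finset.sum_le_sum fun i _ => ?_)
    rw [norm_smul, Real.norm_of_nonneg (kG_pos hε _).le]
    exact mul_le_mul_of_nonneg_left (hD i) (kG_pos hε _).le
  rw [e, norm_smul, Real.norm_of_nonneg (by positivity)]
  calc _ ≤ ((∑ i, kG d ε (θ - X i))⁻¹ * (1 / ε ^ 2)) * ((∑ i, kG d ε (θ - X i)) * D) := by
        gcongr
    _ = D / ε ^ 2 := by field_simp

lemma quadGrowth_negLogPost (hε : 0 < ε) (X : Fin n → EuclideanSpace ℝ (Fin d)) (j : Fin n) :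
    QuadGrowth (negLogPost ε X j) := by
  refine quadGrowth_of_gradient (hasGradientAt_negLogPost hε X j) (B := 0) le_rfl
    (A := (∑ i, ‖X i - X j‖) / ε ^ 2) fun x => ?_
  rw [zero_mul, add_zero]
  exact norm_gradNegLogPost_le hε X j (fun i => Finset.single_le_sum
    (f := fun i => ‖X i - X j‖) (fun i _ => norm_nonneg _) (Finset.mem_univ i)) x

/-- The pointwise majorant of `q_Y log q_Y` obtained by replacing the posterior of the mixture
centered at `Y` with that of the mixture centered at `X`. -/
noncomputable def entropyMajorant (ε : ℝ) (X Y : Fin n → EuclideanSpace ℝ (Fin d))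
    (θ : EuclideanSpace ℝ (Fin d)) : ℝ :=
  (1 / n : ℝ) * ∑ j, (kG d ε (θ - Y j) * (Real.log (kG d ε (θ - Y j)) - Real.log n) +
    kG d ε (θ - Y j) * negLogPost ε X j θ)

lemma log_qMix (hε : 0 < ε) (hn : 1 ≤ n) (X : Fin n → EuclideanSpace ℝ (Fin d))
    (θ : EuclideanSpace ℝ (Fin d)) :
    Real.log (qMix d n ε X θ) = Real.log (∑ i, kG d ε (θ - X i)) - Real.log n := by
  have hn' : (0 : ℝ) < n := by exact_mod_cast hn
  rw [qMix, Real.log_mul (by positivity) (sum_kG_pos hε X ⟨0, hn⟩ θ).ne', one_div, Real.log_inv]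
  ring

lemma qMix_mul_log_eq (hε : 0 < ε) (hn : 1 ≤ n) (X : Fin n → EuclideanSpace ℝ (Fin d))
    (θ : EuclideanSpace ℝ (Fin d)) :
    qMix d n ε X θ * Real.log (qMix d n ε X θ) = entropyMajorant ε X X θ := by
  rw [log_qMix hε hn, qMix, entropyMajorant, mul_assoc, Finset.sum_mul]
  congr 1
  refine Finset.sum_congr rfl fun j _ => ?_
  unfold negLogPost
  ring

/-- The log-sum inequality: the relative entropy of the weights `a j / ∑ a` with respect to the
weights `b j / ∑ b` is nonnegative. -/
lemma log_sum_inequality (hn : 1 ≤ n) {a b : Fin n → ℝ} (ha : ∀ j, 0 < a j) (hb : ∀ j, 0 < b j)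
    (c : ℝ) : (∑ j, a j) * (Real.log (∑ j, a j) - c) ≤
      ∑ j, (a j * (Real.log (a j) - c) + a j * (Real.log (∑ i, b i) - Real.log (b j))) := by
  have hA : 0 < ∑ j, a j := Finset.sum_pos (fun i _ => ha i) ⟨⟨0, hn⟩, Finset.mem_univ _⟩
  have hB : 0 < ∑ j, b j := Finset.sum_pos (fun i _ => hb i) ⟨⟨0, hn⟩, Finset.mem_univ _⟩
  generalize hAdef : ∑ j, a j = A at *
  generalize hBdef : ∑ j, b j = B at *
  have key : ∀ j, a j * (Real.log A - c) ≤
      (a j * (Real.log (a j) - c) + a j * (Real.log B - Real.log (b j))) +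
        (b j * (A / B) - a j) := by
    intro j
    have haj := ha j
    have hbj := hb j
    have h1 := Real.log_le_sub_one_of_pos (show 0 < b j * A / (B * a j) by positivity)
    rw [Real.log_div (by positivity) (by positivity), Real.log_mul hbj.ne' hA.ne',
      Real.log_mul hB.ne' haj.ne'] at h1
    have h2 := mul_le_mul_of_nonneg_left h1 haj.le
    have e : a j * (b j * A / (B * a j) - 1) = b j * (A / B) - a j := by
      field_simp
    rw [e] at h2
    linarith
  have hs := Finset.sum_le_sum fun j (_ : j ∈ Finset.univ) => key j
  rw [← Finset.sum_mul, Finset.sum_add_distrib (f := fun j => a j * (Real.log (a j) - c) +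
    a j * (Real.log B - Real.log (b j))), Finset.sum_sub_distrib, ← Finset.sum_mul,
    hAdef, hBdef] at hs
  have hcancel : B * (A / B) = A := by field_simp
  linarith

lemma qMix_mul_log_le (hε : 0 < ε) (hn : 1 ≤ n) (X Y : Fin n → EuclideanSpace ℝ (Fin d))
    (θ : EuclideanSpace ℝ (Fin d)) :
    qMix d n ε Y θ * Real.log (qMix d n ε Y θ) ≤ entropyMajorant ε X Y θ := by
  rw [log_qMix hε hn, qMix, entropyMajorant, mul_assoc]
  exact mul_le_mul_of_nonneg_left (log_sum_inequality hn (fun j => kG_pos hε (θ - Y j))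
    (fun j => kG_pos hε (θ - X j)) (Real.log n)) (by positivity)

lemma integrable_entropyMajorant_term (hε : 0 < ε) (X Y : Fin n → EuclideanSpace ℝ (Fin d))
    (j : Fin n) :
    Integrable (fun θ => kG d ε (θ - Y j) * (Real.log (kG d ε (θ - Y j)) - Real.log n)) ∧
    Integrable (fun θ => kG d ε (θ - Y j) * negLogPost ε X j θ) := by
  constructor
  · have h := ((quadGrowth_log_kG (d := d) hε).add
      (QuadGrowth.const (-Real.log n))).integrable_kG_smul hε
    simpa [sub_eq_add_neg] using h.comp_sub_right (Y j)
  · exact (quadGrowth_negLogPost hε X j).integrable_kG_sub_smul hε (Y j)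

lemma integrable_entropyMajorant (hε : 0 < ε) (X Y : Fin n → EuclideanSpace ℝ (Fin d)) :
    Integrable (entropyMajorant ε X Y) := by
  refine Integrable.const_mul (integrable_finsetSum _ fun j _ => ?_) _
  exact (integrable_entropyMajorant_term hε X Y j).1.add (integrable_entropyMajorant_term hε X Y j).2

/-- The first summand is, up to sign and an additive constant, the differential entropy of a single
Gaussian; translation invariance makes it independent of the centers. -/
lemma integral_entropyMajorant (hε : 0 < ε) (X Y : Fin n → EuclideanSpace ℝ (Fin d)) :
    ∫ θ, entropyMajorant ε X Y θ =
      (1 / n : ℝ) * ∑ _j : Fin n, (∫ θ, kG d ε θ * (Real.log (kG d ε θ) - Real.log n)) +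
      (1 / n : ℝ) * ∑ j, ∫ θ, kG d ε (θ - Y j) • negLogPost ε X j θ := by
  have hi := integrable_entropyMajorant_term hε X Y
  unfold entropyMajorant
  rw [integral_const_mul, integral_finsetSum _ fun j _ => by exact (hi j).1.add (hi j).2, ← mul_add,
    ← Finset.sum_add_distrib]
  congr 1
  refine Finset.sum_congr rfl fun j _ => ?_
  rw [integral_add (hi j).1 (hi j).2, integral_sub_right_eq_self (μ := volume)
    (fun θ => kG d ε θ * (Real.log (kG d ε θ) - Real.log n)) (Y j)]
  rfl

/-- Comparing the majorant based at `X` at `Y` and at `X`, where it is exact, decouples the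
particles. -/
lemma entropy_sub_le (hε : 0 < ε) (hn : 1 ≤ n) (X Y : Fin n → EuclideanSpace ℝ (Fin d)) :
    (∫ θ, qMix d n ε Y θ * Real.log (qMix d n ε Y θ)) -
        ∫ θ, qMix d n ε X θ * Real.log (qMix d n ε X θ) ≤
      (1 / n : ℝ) * ∑ j, ((∫ θ, kG d ε (θ - Y j) • negLogPost ε X j θ) -
        ∫ θ, kG d ε (θ - X j) • negLogPost ε X j θ) := by
  have h1 : ∫ θ, qMix d n ε Y θ * Real.log (qMix d n ε Y θ) ≤ ∫ θ, entropyMajorant ε X Y θ := by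
    refine integral_mono ?_ (integrable_entropyMajorant hε X Y) (qMix_mul_log_le hε hn X Y)
    simp_rw [qMix_mul_log_eq hε hn Y]
    exact integrable_entropyMajorant hε Y Y
  simp_rw [qMix_mul_log_eq hε hn X]
  rw [integral_entropyMajorant hε X Y] at h1
  rw [integral_entropyMajorant hε X X, Finset.sum_sub_distrib, mul_sub]
  linarith

lemma integral_potential (hε : 0 < ε) {V : EuclideanSpace ℝ (Fin d) → ℝ} (hV : QuadGrowth V)
    (X : Fin n → EuclideanSpace ℝ (Fin d)) :
    ∫ θ, V θ * qMix d n ε X θ = (1 / n : ℝ) * ∑ j, ∫ θ, kG d ε (θ - X j) • V θ := by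
  rw [← integral_finsetSum _ fun j _ => hV.integrable_kG_sub_smul hε (X j), ← integral_const_mul]
  congr 1 with θ
  simp only [qMix, smul_eq_mul, ← Finset.sum_mul]
  ring

/-- The entropic part of the particle gradient is the Gaussian average of the gradient of
`negLogPost`: the two integrands differ by a multiple of the odd function `z ↦ k_ε(z) z`. -/
lemma particleGrad_eq (hε : 0 < ε)
    (gradV : EuclideanSpace ℝ (Fin d) → EuclideanSpace ℝ (Fin d))
    (X : Fin n → EuclideanSpace ℝ (Fin d)) (j : Fin n) :
    particleGrad d n ε gradV X j = (∫ y, kG d ε (y - X j) • gradV y) +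
      ∫ y, kG d ε (y - X j) • gradNegLogPost ε X j y := by
  have hD : ∀ i, ‖X i - X j‖ ≤ ∑ i, ‖X i - X j‖ := fun i => Finset.single_le_sum
    (f := fun i => ‖X i - X j‖) (fun i _ => norm_nonneg _) (Finset.mem_univ i)
  have hq : QuadGrowth (gradNegLogPost ε X j) := ⟨continuous_gradNegLogPost hε X j, _, 0, le_rfl,
    fun z => by simpa using norm_gradNegLogPost_le hε X j hD z⟩
  have i1 := hq.integrable_kG_sub_smul hε (X j)
  have i2 := ((QuadGrowth.id_sub (X j)).integrable_kG_sub_smul hε (X j)).smul (1 / ε ^ 2)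
  unfold particleGrad
  congr 1
  have e : ∀ y, ((∑ i, kG d ε (y - X i))⁻¹ * kG d ε (y - X j)) • (∑ i, nablaKG d ε (y - X i)) =
      kG d ε (y - X j) • gradNegLogPost ε X j y -
        (1 / ε ^ 2) • (kG d ε (y - X j) • (y - X j)) := by
    intro y
    unfold gradNegLogPost
    module
  simp_rw [e]
  rw [integral_sub i1 (by exact i2), integral_smul, integral_kG_sub_smul_id, smul_zero, sub_zero]

end Entropy

/-- Proposition 3.3, descent lemma for the mollified relative entropy: one
step of gradient descent on the particle positions decreases the mollified relative
entropy by `γ(1 - γM/2)` times the squared norm of the Wasserstein gradient. -/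
theorem stmt_7 (d : ℕ) (hd : 1 ≤ d) (ε : ℝ) (hε : 0 < ε) (n : ℕ) (hn : 1 ≤ n)
    (V : EuclideanSpace ℝ (Fin d) → ℝ)
    (gradV : EuclideanSpace ℝ (Fin d) → EuclideanSpace ℝ (Fin d))
    (hV : ∀ x, HasGradientAt V (gradV x) x)
    (L : ℝ) (hL : ∀ x y, ‖gradV x - gradV y‖ ≤ L * ‖x - y‖)
    (h : ℝ) (hh : 0 < h)
    (X : Fin n → EuclideanSpace ℝ (Fin d))
    (hmom : (1 / n : ℝ) * ∑ j, ‖X j‖ ^ 2 ≤ h)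
    (M : ℝ)
    (hM : M = L + (1 / ε ^ 2 + 3 * Real.sqrt (h * n) / ε ^ 3 + Real.sqrt n / ε ^ 2 +
      n * Real.sqrt h / ε ^ 3))
    (γ : ℝ) (hγ : 0 < γ) :
    mollF d n ε V (fun j => X j - γ • particleGrad d n ε gradV X j) - mollF d n ε V X ≤
      -γ * (1 - γ * M / 2) * ((1 / n : ℝ) * ∑ j, ‖particleGrad d n ε gradV X j‖ ^ 2) := by
  have hn' : (0 : ℝ) < n := by exact_mod_cast hn
  -- In positive dimension there are two distinct points, so a Lipschitz constant is nonnegative.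
  have hL0 : 0 ≤ L := by
    have h1 := hL (EuclideanSpace.single ⟨0, hd⟩ 1) 0
    have h2 := (norm_nonneg _).trans h1
    simpa using h2
  have hgc : Continuous gradV := by
    refine (LipschitzWith.of_dist_le_mul (K := L.toNNReal) fun x y => ?_).continuous
    rw [dist_eq_norm, dist_eq_norm, Real.coe_toNNReal _ hL0]
    exact hL x y
  have hgb : ∀ x, ‖gradV x‖ ≤ ‖gradV 0‖ + L * ‖x‖ := by
    intro x
    have h1 := hL x 0
    rw [sub_zero] at h1
    have h2 := norm_add_le (gradV 0) (gradV x - gradV 0)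
    rw [add_sub_cancel] at h2
    linarith
  have hqV := quadGrowth_of_gradient hV hL0 hgb
  have hqg : QuadGrowth gradV := by
    refine ⟨hgc, ‖gradV 0‖ + L, L, hL0, fun z => (hgb z).trans ?_⟩
    nlinarith [sq_nonneg (‖z‖ - 1), norm_nonneg z,
      mul_nonneg hL0 (sq_nonneg (‖z‖ - 1)), mul_nonneg hL0 (norm_nonneg z)]
  have hXn : ∀ i, ‖X i‖ ≤ Real.sqrt (h * n) := by
    intro i
    refine Real.le_sqrt_of_sq_le ?_
    have h1 : ‖X i‖ ^ 2 ≤ ∑ j, ‖X j‖ ^ 2 := Finset.single_le_sum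
      (f := fun i => ‖X i‖ ^ 2) (fun i _ => by positivity) (Finset.mem_univ i)
    rw [one_div, inv_mul_le_iff₀ hn'] at hmom
    linarith
  have hD : ∀ i j, ‖X i - X j‖ ≤ 2 * Real.sqrt (h * n) := fun i j => by
    linarith [norm_sub_le (X i) (X j), hXn i, hXn j]
  set G := particleGrad d n ε gradV X with hG
  have hM' : L + 2 * Real.sqrt (h * n) / ε ^ 3 ≤ M := by
    have h1 : 0 ≤ 1 / ε ^ 2 + Real.sqrt (h * n) / ε ^ 3 + Real.sqrt n / ε ^ 2 +
      n * Real.sqrt h / ε ^ 3 := by positivity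
    have h2 : 3 * Real.sqrt (h * n) / ε ^ 3 =
      2 * Real.sqrt (h * n) / ε ^ 3 + Real.sqrt (h * n) / ε ^ 3 := by ring
    linarith
  have hent := entropy_sub_le hε hn X (fun j => X j - γ • G j)
  have hterm : ∀ j, ((∫ θ, kG d ε (θ - (X j - γ • G j)) • V θ) -
        ∫ θ, kG d ε (θ - X j) • V θ) +
      ((∫ θ, kG d ε (θ - (X j - γ • G j)) • negLogPost ε X j θ) -
        ∫ θ, kG d ε (θ - X j) • negLogPost ε X j θ) ≤
      -γ * (1 - γ * M / 2) * ‖G j‖ ^ 2 := by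
    intro j
    have h1 := descent_of_lipschitz_gradient hε hV hL hqV hqg (X j) (-(γ • G j))
    have h2 := descent_of_bounded_gradient hε (hasGradientAt_negLogPost hε X j)
      (continuous_gradNegLogPost hε X j)
      (norm_gradNegLogPost_le hε X j fun i => hD i j) (X j) (-(γ • G j))
    rw [← sub_eq_add_neg, norm_neg, norm_smul, Real.norm_of_nonneg hγ.le] at h1 h2
    have h3 : ⟪-(γ • G j), ∫ z, kG d ε (z - X j) • gradV z⟫ +
        ⟪-(γ • G j), ∫ z, kG d ε (z - X j) • gradNegLogPost ε X j z⟫ = -γ * ‖G j‖ ^ 2 := by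
      rw [← inner_add_right, ← particleGrad_eq hε, ← hG, inner_neg_left, inner_smul_left,
        real_inner_self_eq_norm_sq]
      simp
    have h4 : 2 * Real.sqrt (h * n) / ε ^ 2 / ε = 2 * Real.sqrt (h * n) / ε ^ 3 := by
      field_simp
    rw [h4] at h2
    have h5 := mul_le_mul_of_nonneg_right hM' (show 0 ≤ (γ * ‖G j‖) ^ 2 / 2 by positivity)
    linarith
  have hsum := mul_le_mul_of_nonneg_left
    (Finset.sum_le_sum fun j (_ : j ∈ Finset.univ) => hterm j) (show 0 ≤ (1 / n : ℝ) by positivity)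
  rw [← Finset.mul_sum, Finset.sum_add_distrib, Finset.sum_sub_distrib, mul_add, mul_sub] at hsum
  unfold mollF
  rw [integral_potential hε hqV, integral_potential hε hqV]
  linarith
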